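/- arXiv:2102.12931 — 2 statements merged into one kernel-verified Lean document; each statement's English description precedes it below -/
import Mathlib

section
/- Every semisimple Boolean inverse semigroup is isomorphic to a restricted direct product ⊕_{i∈I} M_{|X_i|}(G_i⁰), where each factor is the Boolean inverse semigroup of |X_i| × |X_i| generalized rook matrices over a group G_i with a zero adjoined, for nonempty sets X_i. -/
namespace Paper

/-- An inverse semigroup with zero: an associative multiplication, a zero that is
absorbing, and a map `⁻¹` sending each element to its unique generalized inverse. -/
class IsInverseSemigroup (S : Type*) [Mul S] [Zero S] [Inv S] : Prop where
  mul_assoc : ∀ a b c : S, a * b * c = a * (b * c)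
  mul_inv_mul : ∀ a : S, a * a⁻¹ * a = a
  inv_mul_inv : ∀ a : S, a⁻¹ * a * a⁻¹ = a⁻¹
  inv_unique : ∀ a b : S, a * b * a = a → b * a * b = b → b = a⁻¹
  zero_mul : ∀ a : S, 0 * a = 0
  mul_zero : ∀ a : S, a * 0 = 0

variable {S : Type*} [Mul S] [Zero S] [Inv S]

/-- The natural partial order: `a ≤ b` iff `a = b * a⁻¹ * a`. -/
def nle (a b : S) : Prop := a = b * a⁻¹ * a

/-- `e` is an idempotent. -/
def idem (e : S) : Prop := e * e = e

/-- `a` and `b` are compatible. -/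
def compat (a b : S) : Prop := idem (a⁻¹ * b) ∧ idem (a * b⁻¹)

/-- `a` and `b` are orthogonal. -/
def orth (a b : S) : Prop := a⁻¹ * b = 0 ∧ a * b⁻¹ = 0

/-- `j` is the least upper bound of `a` and `b` for the natural partial order. -/
def isJoin (a b j : S) : Prop :=
  nle a j ∧ nle b j ∧ ∀ c : S, nle a c → nle b c → nle j c

/-- `m` is the greatest lower bound of `a` and `b` for the natural partial order. -/
def isMeet (a b m : S) : Prop :=
  nle m a ∧ nle m b ∧ ∀ c : S, nle c a → nle c b → nle c m

/-- `a` is an atom: a nonzero element with nothing strictly between it and `0`. -/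
def isAtomElem (a : S) : Prop := a ≠ 0 ∧ ∀ x : S, nle x a → x = a ∨ x = 0

/-- `s` is the least upper bound of the finite family `f`. -/
def isJoinFin {m : ℕ} (f : Fin m → S) (s : S) : Prop :=
  (∀ i, nle (f i) s) ∧ ∀ c : S, (∀ i, nle (f i) c) → nle s c

/-- A Boolean inverse semigroup: a nonzero inverse semigroup with zero in which
compatible pairs have joins, multiplication distributes over binary compatible joins,
and the idempotents form a generalized Boolean algebra under the natural partial
order (meets of idempotents are automatically given by multiplication; the extra
requirement is the existence of relative complements). -/
class IsBooleanInverseSemigroup (S : Type*) [Mul S] [Zero S] [Inv S]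
    extends IsInverseSemigroup S : Prop where
  exists_ne_zero : ∃ a : S, a ≠ 0
  compat_join : ∀ a b : S, compat a b → ∃ j, isJoin a b j
  mul_join : ∀ a b j c : S, isJoin a b j → isJoin (c * a) (c * b) (c * j)
  join_mul : ∀ a b j c : S, isJoin a b j → isJoin (a * c) (b * c) (j * c)
  relcomp : ∀ e f : S, idem e → idem f → nle f e →
    ∃ g : S, idem g ∧ nle g e ∧ g * f = 0 ∧ isJoin f g e


/-- An `X × X` generalized rook matrix over `G⁰` (`G` with a zero adjoined):
finitely many nonzero entries, and any two entries in the same row (resp. column)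
lying in distinct columns (resp. rows) have orthogonal ranges (resp. domains). -/
def IsRook {X : Type*} {G : Type*} [Group G] (M : X → X → WithZero G) : Prop :=
  Set.Finite {p : X × X | M p.1 p.2 ≠ 0} ∧
  (∀ i j k : X, j ≠ k → (M i j)⁻¹ * M i k = 0) ∧
  (∀ i j k : X, i ≠ j → M i k * (M j k)⁻¹ = 0)

open Classical in
/-- The product of rook matrices: `(A B)_{i j} = ⊕ₖ A_{i k} B_{k j}` (for rook
matrices, at most one summand is nonzero). -/
noncomputable def rookMul {X : Type*} {G : Type*} [Group G]
    (A B : X → X → WithZero G) : X → X → WithZero G := fun i j =>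
  if h : ∃ k, A i k * B k j ≠ 0 then A i h.choose * B h.choose j else 0

universe u

/-!
The atoms of `S` form a discrete groupoid, whose identities are the idempotent atoms. For idempotent
atoms `e`, `f` the block `e a f` of an element `a` is zero or an atom, and each row and each column
of blocks has at most one nonzero entry. Since every element lies above only finitely many others,
relative complements show that `a` is determined by its blocks, only finitely many of which are
nonzero. Conversely, a finite family of pairwise orthogonal elements has a join that multiplication
preserves, so every finite pattern of blocks with at most one nonzero entry in each row and column
comes from an element.

A connected component of the groupoid with base point `r` and set of objects `X` is `G × X × X`,
where `G` is the isotropy group at `r`. Choosing an arrow from `r` to each object identifies every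
block in this component with an element of `r S r = G⁰`, and blocks between distinct components
vanish.
-/

theorem idem.eq {S : Type*} [Mul S] {e : S} (he : idem e) : e * e = e := he

section InverseSemigroup

variable [IsInverseSemigroup S]

open IsInverseSemigroup (mul_inv_mul inv_mul_inv)

/-- The given operations, packaged for the library lemmas on semigroups with zero. -/
local instance semigroupWithZero : SemigroupWithZero S where
  mul_assoc := IsInverseSemigroup.mul_assoc
  zero_mul := IsInverseSemigroup.zero_mul
  mul_zero := IsInverseSemigroup.mul_zero

/-- Inversion in an inverse semigroup is involutive, since `a` is an inverse of `a⁻¹`. -/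
local instance involutiveInv : InvolutiveInv S where
  inv_inv a := (IsInverseSemigroup.inv_unique a⁻¹ a (inv_mul_inv a) (mul_inv_mul a)).symm

theorem idem.mul_mul {e : S} (he : idem e) (a : S) : e * (e * a) = e * a := by
  rw [← mul_assoc, he]

theorem idem.inv_eq {e : S} (he : idem e) : e⁻¹ = e :=
  (IsInverseSemigroup.inv_unique e e (by rw [he, he]) (by rw [he, he])).symm

theorem idem_zero : idem (0 : S) := zero_mul 0

theorem inv_zero : (0 : S)⁻¹ = 0 := idem_zero.inv_eq

theorem idem_mul_inv (a : S) : idem (a * a⁻¹) := by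
  rw [idem, ← mul_assoc, mul_inv_mul]

theorem idem_inv_mul (a : S) : idem (a⁻¹ * a) := by
  rw [idem, ← mul_assoc, inv_mul_inv]

-- `f (ef)⁻¹ e` is an inverse of `ef` and an idempotent; hence so are `(ef)⁻¹` and `ef`.
theorem idem.mul {e f : S} (he : idem e) (hf : idem f) : idem (e * f) := by
  have cancel : (e * f)⁻¹ * (e * (f * ((e * f)⁻¹ * e))) = (e * f)⁻¹ * e := by
    simpa only [mul_assoc] using congrArg (· * e) (inv_mul_inv (e * f))
  have inv_eq : f * ((e * f)⁻¹ * e) = (e * f)⁻¹ := by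
    apply IsInverseSemigroup.inv_unique
    · simpa only [mul_assoc, he.mul_mul, hf.mul_mul] using mul_inv_mul (e * f)
    · simp only [mul_assoc, he.mul_mul, hf.mul_mul, cancel]
  have idem_inv : idem (e * f)⁻¹ := by
    rw [idem, ← inv_eq]
    simp only [mul_assoc, cancel]
  rwa [← inv_inv (e * f), idem_inv.inv_eq]

theorem idem.mul_comm {e f : S} (he : idem e) (hf : idem f) : e * f = f * e := by
  have inv_eq : f * e = (e * f)⁻¹ := by
    apply IsInverseSemigroup.inv_unique
    · simpa only [mul_assoc, he.mul_mul, hf.mul_mul] using (he.mul hf).eq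
    · simpa only [mul_assoc, he.mul_mul, hf.mul_mul] using (hf.mul he).eq
  rw [inv_eq, (he.mul hf).inv_eq]

theorem idem.mul_left_comm {e f : S} (he : idem e) (hf : idem f) (a : S) :
    e * (f * a) = f * (e * a) := by
  rw [← mul_assoc, he.mul_comm hf, mul_assoc]

theorem mul_inv_rev (a b : S) : (a * b)⁻¹ = b⁻¹ * a⁻¹ := by
  symm
  apply IsInverseSemigroup.inv_unique
  · calc a * b * (b⁻¹ * a⁻¹) * (a * b) = a * ((b * b⁻¹) * ((a⁻¹ * a) * b)) := by
          simp only [mul_assoc]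
      _ = a * a⁻¹ * a * (b * b⁻¹ * b) := by
          rw [(idem_mul_inv b).mul_left_comm (idem_inv_mul a)]; simp only [mul_assoc]
      _ = a * b := by rw [mul_inv_mul, mul_inv_mul]
  · calc b⁻¹ * a⁻¹ * (a * b) * (b⁻¹ * a⁻¹) = b⁻¹ * ((a⁻¹ * a) * ((b * b⁻¹) * a⁻¹)) := by
          simp only [mul_assoc]
      _ = b⁻¹ * b * b⁻¹ * (a⁻¹ * a * a⁻¹) := by
          rw [(idem_inv_mul a).mul_left_comm (idem_mul_inv b)]; simp only [mul_assoc]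
      _ = b⁻¹ * a⁻¹ := by rw [inv_mul_inv, inv_mul_inv]

theorem idem.mul_mul_inv {e : S} (he : idem e) (a : S) : idem (a * e * a⁻¹) := by
  calc a * e * a⁻¹ * (a * e * a⁻¹) = a * (e * ((a⁻¹ * a) * (e * a⁻¹))) := by
        simp only [mul_assoc]
    _ = a * (e * (e * (a⁻¹ * a * a⁻¹))) := by
        rw [(idem_inv_mul a).mul_left_comm he, mul_assoc]
    _ = a * e * a⁻¹ := by rw [inv_mul_inv, he.mul_mul, mul_assoc]

theorem idem.mul_mul_inv_mul {e : S} (he : idem e) (a : S) : a * e * a⁻¹ * a = a * e := by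
  rw [mul_assoc, mul_assoc, he.mul_comm (idem_inv_mul a), ← mul_assoc, ← mul_assoc, mul_inv_mul]

theorem nle_iff_exists_idem_mul {a b : S} : nle a b ↔ ∃ e : S, idem e ∧ a = e * b := by
  constructor
  · intro hab
    refine ⟨_, (idem_inv_mul a).mul_mul_inv b, ?_⟩
    rwa [(idem_inv_mul a).mul_mul_inv_mul, ← mul_assoc]
  · rintro ⟨e, he, rfl⟩
    calc e * b = e * (b * b⁻¹ * b) := by rw [mul_inv_mul]
      _ = b * b⁻¹ * (e * (e * b)) := by
        rw [he.mul_mul, (idem_mul_inv b).mul_left_comm he]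
      _ = b * (e * b)⁻¹ * (e * b) := by
        rw [mul_inv_rev, he.inv_eq]; simp only [mul_assoc]

/-- The natural partial order `nle`, as an order instance. It is kept local, since `S` may carry
another order. -/
local instance naturalOrder : PartialOrder S where
  le := nle
  le_refl a := (mul_inv_mul a).symm
  le_trans a b c hab hbc := by
    obtain ⟨e, he, rfl⟩ := nle_iff_exists_idem_mul.1 hab
    obtain ⟨f, hf, rfl⟩ := nle_iff_exists_idem_mul.1 hbc
    exact nle_iff_exists_idem_mul.2 ⟨e * f, he.mul hf, (mul_assoc _ _ _).symm⟩
  le_antisymm a b hab hba := by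
    obtain ⟨e, he, rfl⟩ := nle_iff_exists_idem_mul.1 hab
    obtain ⟨f, hf, hb⟩ := nle_iff_exists_idem_mul.1 hba
    calc e * b = e * (f * (e * b)) := by rw [← hb]
      _ = f * (e * b) := by rw [he.mul_left_comm hf, he.mul_mul]
      _ = b := hb.symm

/-- The zero of `S` is the least element for the natural partial order. -/
local instance naturalOrderBot : OrderBot S where
  bot := 0
  bot_le a := nle_iff_exists_idem_mul.2 ⟨0, idem_zero, (zero_mul a).symm⟩

theorem idem.mul_le_right {e : S} (he : idem e) (a : S) : e * a ≤ a :=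
  nle_iff_exists_idem_mul.2 ⟨e, he, rfl⟩

theorem idem.mul_le_left {e : S} (he : idem e) (a : S) : a * e ≤ a :=
  nle_iff_exists_idem_mul.2 ⟨_, he.mul_mul_inv a, (he.mul_mul_inv_mul a).symm⟩

theorem inv_le_inv_of_le {a b : S} (hab : a ≤ b) : a⁻¹ ≤ b⁻¹ := by
  obtain ⟨e, he, rfl⟩ := nle_iff_exists_idem_mul.1 hab
  rw [mul_inv_rev, he.inv_eq]
  exact he.mul_le_left _

/-! ### Atoms -/

theorem isAtomElem_iff_isAtom {a : S} : isAtomElem a ↔ IsAtom a := by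
  refine ⟨fun ha => ⟨ha.1, fun x hx => (ha.2 x hx.le).resolve_left hx.ne⟩,
    fun ha => ⟨ha.1, fun x hx => (ha.le_iff.1 hx).symm⟩⟩

theorem isAtomElem.eq_of_le {a x : S} (ha : isAtomElem a) (hx : x ≤ a) (hx0 : x ≠ 0) : x = a :=
  (ha.2 x hx).resolve_right hx0

theorem isAtomElem.inv {a : S} (ha : isAtomElem a) : isAtomElem a⁻¹ := by
  refine ⟨fun h => ha.1 (by rw [← inv_inv a, h, inv_zero]), fun x hx => ?_⟩
  have hx' : x⁻¹ ≤ a := by simpa only [inv_inv] using inv_le_inv_of_le hx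
  exact (ha.2 _ hx').imp inv_eq_iff_eq_inv.1 fun h => by rw [← inv_inv x, h, inv_zero]

theorem isAtomElem.mul_right {a b : S} (ha : isAtomElem a) (hab : a * b ≠ 0) :
    isAtomElem (a * b) := by
  refine ⟨hab, fun x hx => ?_⟩
  obtain ⟨e, he, rfl⟩ := nle_iff_exists_idem_mul.1 hx
  rw [← mul_assoc]
  exact (ha.2 _ (he.mul_le_right a)).imp (congrArg (· * b)) fun h => by rw [h, zero_mul]

theorem isAtomElem.mul_left {a b : S} (hb : isAtomElem b) (hab : a * b ≠ 0) :
    isAtomElem (a * b) := by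
  have hinv : isAtomElem (b⁻¹ * a⁻¹) := hb.inv.mul_right fun h => hab <| by
    rw [← inv_inv (a * b), mul_inv_rev, h, inv_zero]
  simpa only [mul_inv_rev, inv_inv] using hinv.inv

theorem mul_inv_ne_zero {a : S} (ha : a ≠ 0) : a * a⁻¹ ≠ 0 := fun h =>
  ha (by rw [← mul_inv_mul a, h, zero_mul])

theorem isAtomElem.inv_mul {a : S} (ha : isAtomElem a) : isAtomElem (a⁻¹ * a) :=
  ha.mul_left (by simpa only [inv_inv] using mul_inv_ne_zero ha.inv.1)

theorem wellFoundedLT_of_finite_nle (hfin : ∀ a : S, {x : S | nle x a}.Finite) :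
    WellFoundedLT S :=
  StrictMono.wellFoundedLT (f := fun a : S => (Set.Iic a).ncard) fun _ b hab =>
    Set.ncard_lt_ncard (Set.Iic_ssubset_Iic.2 hab) (hfin b)

/-- The idempotent atoms of `S`: the identities of the discrete groupoid of atoms of `S`. -/
abbrev IdemAtom (S : Type*) [Mul S] [Zero S] [Inv S] : Type _ :=
  {e : S // idem e ∧ isAtomElem e}

namespace IdemAtom

theorem eq_of_mul_ne_zero {e f : IdemAtom S} (hef : (e : S) * f ≠ 0) : e = f :=
  Subtype.ext <| (e.2.2.eq_of_le (f.2.1.mul_le_left e) hef).symm.trans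
    (f.2.2.eq_of_le (e.2.1.mul_le_right f) hef)

theorem mul_mul_inv_eq {e : IdemAtom S} {a : S} (h : e * a ≠ 0) :
    e * a * (e * a)⁻¹ = e := by
  refine e.2.2.eq_of_le (nle_iff_exists_idem_mul.2 ⟨_, idem_mul_inv (e * a), ?_⟩)
    (mul_inv_ne_zero h)
  rw [mul_inv_rev, e.2.1.inv_eq]
  simp only [mul_assoc]
  rw [e.2.1]

theorem inv_mul_mul_eq {f : IdemAtom S} {a : S} (h : a * f ≠ 0) :
    (a * f)⁻¹ * (a * f) = f := by
  have hinv : (f : S) * a⁻¹ = (a * f)⁻¹ := by rw [mul_inv_rev, f.2.1.inv_eq]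
  have hne : (f : S) * a⁻¹ ≠ 0 := fun h0 => h (by rw [← inv_inv (a * f), ← hinv, h0, inv_zero])
  simpa only [hinv, inv_inv] using mul_mul_inv_eq hne

theorem mul_mul_eq_mul_left {e f : IdemAtom S} {a : S} (h : e * a * f ≠ 0) :
    e * a * f = e * a :=
  (e.2.2.mul_right (left_ne_zero_of_mul h)).eq_of_le (f.2.1.mul_le_left _) h

theorem mul_mul_eq_mul_right {e f : IdemAtom S} {a : S} (h : e * a * f ≠ 0) :
    e * a * f = a * f := by
  rw [mul_assoc] at h ⊢
  exact (f.2.2.mul_left (right_ne_zero_of_mul h)).eq_of_le (e.2.1.mul_le_right _) h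

theorem mul_mul_mul_inv_eq {e f : IdemAtom S} {a : S} (h : e * a * f ≠ 0) :
    e * a * f * (e * a * f)⁻¹ = e := by
  rw [mul_mul_eq_mul_left h]
  exact mul_mul_inv_eq (left_ne_zero_of_mul h)

theorem eq_of_row_ne_zero {e f f' : IdemAtom S} {a : S} (h : e * a * f ≠ 0)
    (h' : e * a * f' ≠ 0) : f = f' := by
  refine Subtype.ext ?_
  rw [← inv_mul_mul_eq h, ← inv_mul_mul_eq h', mul_mul_eq_mul_left h, mul_mul_eq_mul_left h']

theorem eq_of_column_ne_zero {e e' f : IdemAtom S} {a : S} (h : e * a * f ≠ 0)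
    (h' : e' * a * f ≠ 0) : e = e' := by
  refine Subtype.ext ?_
  rw [← mul_mul_mul_inv_eq h, ← mul_mul_mul_inv_eq h', mul_mul_eq_mul_right h,
    mul_mul_eq_mul_right h']

theorem eq_and_eq_of_mul_mul_ne_zero {e f e' f' : IdemAtom S} {x : S} (hx : e' * x * f' = x)
    (h : e * x * f ≠ 0) : e = e' ∧ f = f' := by
  rw [← hx] at h
  have hee' : (e : S) * e' ≠ 0 := fun h0 => h (by simp only [← mul_assoc, h0, zero_mul])
  have hff' : (f' : S) * f ≠ 0 := fun h0 => h (by simp only [mul_assoc, h0, mul_zero])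
  exact ⟨eq_of_mul_ne_zero hee', (eq_of_mul_ne_zero hff').symm⟩

theorem orth_of_ne {e f e' f' : IdemAtom S} {x y : S} (hx : e * x * f = x)
    (hy : e' * y * f' = y) (he : e ≠ e') (hf : f ≠ f') : orth x y := by
  have hee' : (e : S) * e' = 0 := not_not.1 fun h => he (eq_of_mul_ne_zero h)
  have hff' : (f : S) * f' = 0 := not_not.1 fun h => hf (eq_of_mul_ne_zero h)
  constructor
  · calc x⁻¹ * y = (e * x * f)⁻¹ * (e' * y * f') := by rw [hx, hy]
      _ = f * x⁻¹ * (e * e') * (y * f') := by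
        simp only [mul_inv_rev, e.2.1.inv_eq, f.2.1.inv_eq, mul_assoc]
      _ = 0 := by rw [hee', mul_zero, zero_mul]
  · calc x * y⁻¹ = e * x * f * (e' * y * f')⁻¹ := by rw [hx, hy]
      _ = e * x * (f * f') * (y⁻¹ * e') := by
        simp only [mul_inv_rev, e'.2.1.inv_eq, f'.2.1.inv_eq, mul_assoc]
      _ = 0 := by rw [hff', mul_zero, zero_mul]

theorem exists_mul_eq_self [WellFoundedLT S] {g : S} (hg : idem g) (hg0 : g ≠ 0) :
    ∃ e : IdemAtom S, e * g = e := by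
  have := isAtomic_of_orderBot_wellFounded_lt (α := S) wellFounded_lt
  obtain ⟨a, ha, hag⟩ := (eq_bot_or_exists_atom_le g).resolve_left hg0
  obtain ⟨e, he, rfl⟩ := nle_iff_exists_idem_mul.1 hag
  exact ⟨⟨e * g, he.mul hg, isAtomElem_iff_isAtom.2 ha⟩, by rw [mul_assoc, hg]⟩

theorem exists_mul_mul_ne_zero {e : IdemAtom S} {a : S} (h : e * a ≠ 0) :
    ∃ f : IdemAtom S, e * a * f ≠ 0 :=
  ⟨⟨_, idem_inv_mul (e * a), (e.2.2.mul_right h).inv_mul⟩, by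
    rwa [← mul_assoc (e * a : S), mul_inv_mul]⟩

theorem finite_mul_mul_ne_zero {a : S} (ha : {x : S | nle x a}.Finite) :
    {p : IdemAtom S × IdemAtom S | p.1 * a * p.2 ≠ 0}.Finite := by
  refine Set.Finite.of_finite_image (f := fun p => (p.1 * a * p.2 : S)) (ha.subset ?_) ?_
  · rintro _ ⟨p, -, rfl⟩
    exact (p.2.2.1.mul_le_left _).trans (p.1.2.1.mul_le_right a)
  · intro p hp q hq (hpq : (p.1 * a * p.2 : S) = q.1 * a * q.2)
    refine Prod.ext (Subtype.ext ?_) (Subtype.ext ?_)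
    · rw [← mul_mul_mul_inv_eq hp, hpq, mul_mul_mul_inv_eq hq]
    · rw [← inv_mul_mul_eq hp, hpq, inv_mul_mul_eq hq]

end IdemAtom

/-! ### Joins -/

theorem isJoin_unique {a b j k : S} (hj : isJoin a b j) (hk : isJoin a b k) : j = k :=
  le_antisymm (a := j) (hj.2.2 k hk.1 hk.2.1) (hk.2.2 j hj.1 hj.2.1)

theorem isJoin.isLUB_insert {a b j : S} (hj : isJoin a b j) {T : Set S} (hT : IsLUB T b) :
    IsLUB (insert a T) j := by
  refine ⟨?_, fun c hc => hj.2.2 c (hc (Set.mem_insert a T)) (hT.2 fun x hx => hc (Or.inr hx))⟩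
  rintro x (rfl | hx)
  · exact hj.1
  · exact (hT.1 hx).trans hj.2.1

theorem mul_inv_eq_zero_comm {a b : S} : a * b⁻¹ = 0 ↔ b * a⁻¹ = 0 := by
  have key : ∀ {a b : S}, a * b⁻¹ = 0 → b * a⁻¹ = 0 := fun {a b} h => by
    rw [← inv_inv (b * a⁻¹), mul_inv_rev, inv_inv, h, inv_zero]
  exact ⟨key, key⟩

theorem orth.compat {a b : S} (h : orth a b) : compat a b :=
  ⟨by rw [h.1]; exact idem_zero, by rw [h.2]; exact idem_zero⟩

-- `j = j * (j⁻¹ * j) = (j * j⁻¹) * j` turns one-sided products into the two-sided ones in `hj`.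
theorem orth_of_forall_isLUB {T : Set S} {a j : S} (hT : ∀ x ∈ T, orth a x)
    (hj : ∀ c d, IsLUB ((c * · * d) '' T) (c * j * d)) : orth a j := by
  have mul_mul_eq_zero : ∀ c d, (∀ x ∈ T, c * x * d = 0) → c * j * d = 0 := fun c d h =>
    le_bot_iff.1 <| (hj c d).2 <| by
      rintro _ ⟨x, hx, rfl⟩
      exact (h x hx).le
  constructor
  · have h := mul_mul_eq_zero a⁻¹ (j⁻¹ * j) fun x hx => by rw [(hT x hx).1, zero_mul]
    rwa [mul_assoc, ← mul_assoc j, mul_inv_mul] at h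
  · have h := mul_mul_eq_zero (j * j⁻¹) a⁻¹ fun x hx => by
      rw [mul_assoc, mul_inv_eq_zero_comm.1 (hT x hx).2, mul_zero]
    rw [mul_inv_mul] at h
    exact mul_inv_eq_zero_comm.1 h

end InverseSemigroup

section BooleanInverseSemigroup

variable [IsBooleanInverseSemigroup S]

attribute [local instance] semigroupWithZero involutiveInv naturalOrder naturalOrderBot

open IsInverseSemigroup (mul_inv_mul)
open IsBooleanInverseSemigroup (compat_join mul_join join_mul relcomp)

theorem exists_forall_isLUB_mul_mul {T : Set S} (hT : T.Finite) (horth : T.Pairwise orth) :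
    ∃ j, ∀ c d, IsLUB ((c * · * d) '' T) (c * j * d) := by
  induction T, hT using Set.Finite.induction_on with
  | empty => exact ⟨0, fun c d => by
      rw [Set.image_empty, mul_zero, zero_mul]
      exact isLUB_empty⟩
  | @insert a T ha _ ih =>
    obtain ⟨j, hj⟩ := ih (horth.mono (Set.subset_insert a T))
    have haj : orth a j := orth_of_forall_isLUB
      (fun x hx => horth (Set.mem_insert a T) (Or.inr hx) (ne_of_mem_of_not_mem hx ha).symm) hj
    obtain ⟨k, hk⟩ := compat_join a j haj.compat
    refine ⟨k, fun c d => ?_⟩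
    rw [Set.image_insert_eq]
    exact (join_mul _ _ _ d (mul_join _ _ _ c hk)).isLUB_insert (hj c d)

namespace IdemAtom

theorem idem_mul_eq_of_forall_mul_eq [WellFoundedLT S] {a b : S}
    (hab : ∀ e : IdemAtom S, e * a = e * b) {g : S} (hg : idem g) : g * a = g * b := by
  induction g using WellFoundedLT.induction with
  | ind g ih =>
    obtain rfl | hg0 := eq_or_ne g 0
    · rw [zero_mul, zero_mul]
    obtain ⟨e, heg⟩ := exists_mul_eq_self hg hg0
    obtain ⟨h, hh, hhg, hhe, hjoin⟩ :=
      relcomp g e hg e.2.1 (nle_iff_exists_idem_mul.2 ⟨e, e.2.1, heg.symm⟩)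
    have hne : h ≠ g := by
      rintro rfl
      exact e.2.2.1 (by rw [← heg, e.2.1.mul_comm hh, hhe])
    have hjoin_a := join_mul _ _ _ a hjoin
    rw [hab e, ih h (lt_of_le_of_ne hhg hne) hh] at hjoin_a
    exact isJoin_unique hjoin_a (join_mul _ _ _ b hjoin)

theorem ext_mul_left [WellFoundedLT S] {a b : S} (hab : ∀ e : IdemAtom S, e * a = e * b) :
    a = b := by
  have le_of_forall : ∀ {a b : S}, (∀ e : IdemAtom S, e * a = e * b) → a ≤ b :=
    fun {a b} hab => nle_iff_exists_idem_mul.2 ⟨_, idem_mul_inv a, by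
      rw [← idem_mul_eq_of_forall_mul_eq hab (idem_mul_inv a), mul_inv_mul]⟩
  exact (le_of_forall hab).antisymm (le_of_forall fun e => (hab e).symm)

theorem ext_mul_mul [WellFoundedLT S] {a b : S}
    (hab : ∀ e f : IdemAtom S, e * a * f = e * b * f) : a = b := by
  refine ext_mul_left fun e => inv_injective <| ext_mul_left fun f => inv_injective ?_
  simpa only [mul_inv_rev, inv_inv, f.2.1.inv_eq] using hab e f

theorem exists_forall_mul_mul_eq {N : IdemAtom S → IdemAtom S → S}
    (hN : ∀ e f : IdemAtom S, e * N e f * f = N e f)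
    (hfin : {p : IdemAtom S × IdemAtom S | N p.1 p.2 ≠ 0}.Finite)
    (hrow : ∀ e f f', N e f ≠ 0 → N e f' ≠ 0 → f = f')
    (hcol : ∀ e e' f, N e f ≠ 0 → N e' f ≠ 0 → e = e') :
    ∃ a : S, ∀ e f : IdemAtom S, e * a * f = N e f := by
  let T : Set S := Set.range fun p : IdemAtom S × IdemAtom S => N p.1 p.2
  have hT : T.Finite := ((hfin.image _).insert 0).subset
    (Function.range_subset_insert_image_support _)
  have horth : T.Pairwise orth := by
    rintro _ ⟨⟨e, f⟩, rfl⟩ _ ⟨⟨e', f'⟩, rfl⟩ (hne : N e f ≠ N e' f')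
    obtain h | h := eq_or_ne (N e f) 0
    · simp only [orth, h, inv_zero, zero_mul, and_self]
    obtain h' | h' := eq_or_ne (N e' f') 0
    · simp only [orth, h', inv_zero, mul_zero, and_self]
    refine orth_of_ne (hN e f) (hN e' f') ?_ ?_ <;> rintro rfl
    · exact hne (by rw [hrow _ _ _ h h'])
    · exact hne (by rw [hcol _ _ _ h h'])
  obtain ⟨a, ha⟩ := exists_forall_isLUB_mul_mul hT horth
  refine ⟨a, fun e f => (ha e f).unique (IsGreatest.isLUB ⟨⟨_, ⟨(e, f), rfl⟩, hN e f⟩, ?_⟩)⟩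
  rintro _ ⟨_, ⟨⟨e', f'⟩, rfl⟩, rfl⟩
  obtain h | h := eq_or_ne (e * N e' f' * f) 0
  · exact h.trans_le bot_le
  · obtain ⟨rfl, rfl⟩ := eq_and_eq_of_mul_mul_ne_zero (hN e' f') h
    exact (hN e f).le

end IdemAtom

end BooleanInverseSemigroup

section Rook

variable {X G : Type*} [Group G] {A B : X → X → WithZero G}

theorem isRook_iff : IsRook A ↔ {p : X × X | A p.1 p.2 ≠ 0}.Finite ∧
    (∀ i j k, A i j ≠ 0 → A i k ≠ 0 → j = k) ∧ ∀ i j k, A i k ≠ 0 → A j k ≠ 0 → i = j := by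
  simp only [IsRook, mul_eq_zero, inv_eq_zero]
  refine and_congr_right' (and_congr ?_ ?_) <;> exact forall₃_congr fun _ _ _ => by tauto

theorem rookMul_eq_mul_of_row {i k : X} (hrow : ∀ l, A i l ≠ 0 → l = k) (j : X) :
    rookMul A B i j = A i k * B k j := by
  rw [rookMul]
  split_ifs with h
  · rw [hrow _ (left_ne_zero_of_mul h.choose_spec)]
  · exact (not_not.1 (not_exists.1 h k)).symm

theorem rookMul_eq_zero_of_row_eq_zero {i j : X} (h : ∀ k, A i k = 0) :
    rookMul A B i j = 0 :=
  dif_neg fun ⟨k, hk⟩ => hk (by rw [h, zero_mul])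

end Rook

section Coordinates

variable [IsInverseSemigroup S]

attribute [local instance] semigroupWithZero involutiveInv

open IsInverseSemigroup (mul_inv_mul inv_mul_inv)

namespace IdemAtom

/-- The local monoid `r S r` at an idempotent atom `r`. It is a group with zero, whose units form
the isotropy group of `r` in the groupoid of atoms. -/
abbrev Corner (r : IdemAtom S) : Type _ := Subsemigroup.corner (r : S)

namespace Corner

variable {r : IdemAtom S}

theorem mul_left (x : r.Corner) : (r * x : S) = x :=
  ((Subsemigroup.mem_corner_iff r.2.1).1 x.2).1

theorem mul_right (x : r.Corner) : (x * r : S) = x :=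
  ((Subsemigroup.mem_corner_iff r.2.1).1 x.2).2

theorem mul_inv_eq {x : r.Corner} (hx : (x : S) ≠ 0) : (x * (x : S)⁻¹ : S) = r := by
  simpa only [mul_left] using mul_mul_inv_eq (e := r) (a := x) (by rwa [mul_left])

instance : GroupWithZero r.Corner where
  one := ⟨r, r, by simp only [r.2.1.eq]⟩
  one_mul x := Subtype.ext x.mul_left
  mul_one x := Subtype.ext x.mul_right
  zero := ⟨0, 0, by simp only [mul_zero, zero_mul]⟩
  zero_mul x := Subtype.ext (zero_mul (x : S))
  mul_zero x := Subtype.ext (mul_zero (x : S))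
  inv x := ⟨(x : S)⁻¹, (x : S)⁻¹, by
    simpa only [mul_inv_rev, r.2.1.inv_eq, mul_assoc] using
      congrArg (·⁻¹) (show (r * x * r : S) = x by rw [mul_left, mul_right])⟩
  exists_pair_ne := ⟨⟨r, r, by simp only [r.2.1.eq]⟩, ⟨0, 0, by simp only [mul_zero, zero_mul]⟩,
    fun h => r.2.2.1 (congrArg Subtype.val h)⟩
  inv_zero := Subtype.ext inv_zero
  mul_inv_cancel x hx := Subtype.ext (mul_inv_eq fun h => hx (Subtype.ext h))

end Corner

/-- Two idempotent atoms are connected if they are the range and the domain of a common element,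
i.e. if they lie in the same component of the groupoid of atoms. -/
def connected (S : Type*) [Mul S] [Zero S] [Inv S] [IsInverseSemigroup S] :
    Setoid (IdemAtom S) where
  r e f := ∃ u : S, u * u⁻¹ = e ∧ u⁻¹ * u = f
  iseqv := {
    refl e := ⟨e, by rw [e.2.1.inv_eq, e.2.1], by rw [e.2.1.inv_eq, e.2.1]⟩
    symm := fun ⟨u, hr, hd⟩ => ⟨u⁻¹, by rwa [inv_inv], by rwa [inv_inv]⟩
    trans := by
      rintro e f g ⟨u, hur, hud⟩ ⟨v, hvr, hvd⟩
      refine ⟨u * v, ?_, ?_⟩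
      · calc u * v * (u * v)⁻¹ = u * (v * v⁻¹) * u⁻¹ := by simp only [mul_inv_rev, mul_assoc]
          _ = e := by rw [hvr, ← hud, ← mul_assoc, mul_inv_mul, hur]
      · calc (u * v)⁻¹ * (u * v) = v⁻¹ * (u⁻¹ * u) * v := by simp only [mul_inv_rev, mul_assoc]
          _ = g := by rw [hud, ← hvr, ← mul_assoc, inv_mul_inv, hvd] }

theorem connected_of_mul_mul_ne_zero {e f : IdemAtom S} {a : S} (h : e * a * f ≠ 0) :
    connected S e f :=
  ⟨e * a * f, mul_mul_mul_inv_eq h, inv_mul_mul_eq h⟩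

end IdemAtom

/-- The components of the groupoid of atoms; they index the factors of the decomposition. -/
def AtomClass (S : Type*) [Mul S] [Zero S] [Inv S] [IsInverseSemigroup S] : Type _ :=
  Quotient (IdemAtom.connected S)

namespace AtomClass

/-- The component of an idempotent atom. -/
def mk (e : IdemAtom S) : AtomClass S := Quotient.mk _ e

theorem mk_eq_mk {e f : IdemAtom S} : mk e = mk f ↔ IdemAtom.connected S e f := Quotient.eq

/-- A chosen base point of a component. -/
noncomputable def rep (i : AtomClass S) : IdemAtom S := Quotient.out i

theorem mk_rep (i : AtomClass S) : mk i.rep = i := Quotient.out_eq i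

/-- The idempotent atoms of a component, indexing the rows and columns of the `i`-th factor. -/
abbrev Member (i : AtomClass S) : Type _ := {e : IdemAtom S // mk e = i}

/-- The isotropy group at the base point of a component. -/
abbrev Isotropy (i : AtomClass S) : Type _ := (i.rep.Corner)ˣ

open Classical in
/-- The isotropy group with zero adjoined, realized as the local monoid at the base point. -/
noncomputable def cornerEquiv (i : AtomClass S) : WithZero i.Isotropy ≃* i.rep.Corner :=
  WithZero.withZeroUnitsEquiv

variable {i : AtomClass S}

theorem exists_arrow (e : i.Member) : ∃ u : S, u * u⁻¹ = i.rep ∧ u⁻¹ * u = e.1 :=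
  mk_eq_mk.1 (i.mk_rep.trans e.2.symm)

/-- A chosen element connecting the base point of a component to the idempotent atom `e`. -/
noncomputable def arrow (e : i.Member) : S := (exists_arrow e).choose

theorem arrow_mul_inv (e : i.Member) : arrow e * (arrow e)⁻¹ = i.rep :=
  (exists_arrow e).choose_spec.1

theorem inv_mul_arrow (e : i.Member) : (arrow e)⁻¹ * arrow e = e.1 :=
  (exists_arrow e).choose_spec.2

theorem arrow_mul (e : i.Member) : arrow e * e.1 = arrow e := by
  rw [← inv_mul_arrow, ← mul_assoc, mul_inv_mul]

theorem mul_arrow_inv (e : i.Member) : e.1 * (arrow e)⁻¹ = (arrow e)⁻¹ := by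
  rw [← inv_mul_arrow, inv_mul_inv]

theorem rep_mul_arrow (e : i.Member) : i.rep * arrow e = arrow e := by
  rw [← arrow_mul_inv e, mul_inv_mul]

theorem arrow_inv_mul_rep (e : i.Member) : (arrow e)⁻¹ * i.rep = (arrow e)⁻¹ := by
  rw [← arrow_mul_inv e, ← mul_assoc, inv_mul_inv]

/-- The coordinate of the block `e a f` in the isotropy group with zero at the base point. -/
noncomputable def entry (a : S) (e f : i.Member) : WithZero i.Isotropy :=
  i.cornerEquiv.symm ⟨arrow e * a * (arrow f)⁻¹, arrow e * a * (arrow f)⁻¹, by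
    simp only [mul_assoc, arrow_inv_mul_rep]
    simp only [← mul_assoc, rep_mul_arrow]⟩

/-- The element of `e S f` with the given coordinate. -/
noncomputable def block (e f : i.Member) (x : WithZero i.Isotropy) : S :=
  (arrow e)⁻¹ * i.cornerEquiv x * arrow f

theorem coe_cornerEquiv_entry (a : S) (e f : i.Member) :
    (i.cornerEquiv (entry a e f) : S) = arrow e * a * (arrow f)⁻¹ := by
  rw [entry, MulEquiv.apply_symm_apply]

theorem block_entry (a : S) (e f : i.Member) : block e f (entry a e f) = e.1 * a * f.1 := by
  rw [block, coe_cornerEquiv_entry, ← inv_mul_arrow, ← inv_mul_arrow]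
  simp only [mul_assoc]

theorem arrow_mul_block_mul_arrow_inv (e f : i.Member) (x : WithZero i.Isotropy) :
    arrow e * block e f x * (arrow f)⁻¹ = i.cornerEquiv x := by
  calc arrow e * block e f x * (arrow f)⁻¹
      = arrow e * (arrow e)⁻¹ * i.cornerEquiv x * (arrow f * (arrow f)⁻¹) := by
        simp only [block, mul_assoc]
    _ = i.cornerEquiv x := by
        rw [arrow_mul_inv, arrow_mul_inv, IdemAtom.Corner.mul_left, IdemAtom.Corner.mul_right]

theorem mul_block_mul (e f : i.Member) (x : WithZero i.Isotropy) :
    e.1 * block e f x * f.1 = block e f x := by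
  simp only [block, ← mul_assoc, mul_arrow_inv]
  rw [mul_assoc, arrow_mul]

theorem block_injective (e f : i.Member) : Function.Injective (block e f) := fun x y h =>
  i.cornerEquiv.injective <| Subtype.ext <| by
    rw [← arrow_mul_block_mul_arrow_inv e f, h, arrow_mul_block_mul_arrow_inv]

theorem block_zero (e f : i.Member) : block e f 0 = 0 := by
  rw [block, map_zero]
  exact (congrArg (· * arrow f) (mul_zero (arrow e)⁻¹)).trans (zero_mul _)

theorem entry_eq_iff {a : S} {e f : i.Member} {x : WithZero i.Isotropy} :
    entry a e f = x ↔ e.1 * a * f.1 = block e f x := by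
  rw [← block_entry, (block_injective e f).eq_iff]

theorem entry_eq_entry_iff {a b : S} {e f : i.Member} :
    entry a e f = entry b e f ↔ e.1 * a * f.1 = e.1 * b * f.1 := by
  rw [entry_eq_iff, block_entry]

theorem entry_ne_zero_iff {a : S} {e f : i.Member} :
    entry a e f ≠ 0 ↔ e.1 * a * f.1 ≠ 0 := by
  rw [Ne, entry_eq_iff, block_zero]

theorem entry_mul_entry (a b : S) (e f g : i.Member) :
    entry a e f * entry b f g = entry (a * f.1 * b) e g := by
  refine i.cornerEquiv.injective (Subtype.ext ?_)
  rw [map_mul, MulMemClass.coe_mul]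
  simp only [coe_cornerEquiv_entry, ← inv_mul_arrow f, mul_assoc]

/-! ### The matrix of an element -/

theorem eq_of_entry_row_ne_zero {a : S} {e f f' : i.Member} (h : entry a e f ≠ 0)
    (h' : entry a e f' ≠ 0) : f = f' :=
  Subtype.ext <| IdemAtom.eq_of_row_ne_zero (entry_ne_zero_iff.1 h) (entry_ne_zero_iff.1 h')

theorem eq_of_entry_column_ne_zero {a : S} {e e' f : i.Member} (h : entry a e f ≠ 0)
    (h' : entry a e' f ≠ 0) : e = e' :=
  Subtype.ext <| IdemAtom.eq_of_column_ne_zero (entry_ne_zero_iff.1 h) (entry_ne_zero_iff.1 h')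

theorem isRook_entry {a : S} (ha : {x : S | nle x a}.Finite) (i : AtomClass S) :
    IsRook fun e f : i.Member => entry a e f := by
  refine isRook_iff.2 ⟨?_, fun _ _ _ => eq_of_entry_row_ne_zero,
    fun _ _ _ => eq_of_entry_column_ne_zero⟩
  exact ((IdemAtom.finite_mul_mul_ne_zero ha).preimage
    (Subtype.val_injective.prodMap Subtype.val_injective).injOn).subset
      fun _ hp => entry_ne_zero_iff.1 hp

theorem finite_entry_ne_zero {a : S} (ha : {x : S | nle x a}.Finite) :
    {i : AtomClass S | (fun e f : i.Member => entry a e f) ≠ fun _ _ => 0}.Finite := by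
  refine ((IdemAtom.finite_mul_mul_ne_zero ha).image fun p => mk p.1).subset fun i hi => ?_
  obtain ⟨e, he⟩ := Function.ne_iff.1 hi
  obtain ⟨f, hef⟩ := Function.ne_iff.1 he
  exact ⟨(e.1, f.1), entry_ne_zero_iff.1 hef, e.2⟩

theorem exists_entry_ne_zero_of_entry_mul_ne_zero {a b : S} {e g : i.Member}
    (h : entry (a * b) e g ≠ 0) :
    ∃ f : i.Member, entry a e f ≠ 0 := by
  have hea : (e.1 * a : S) ≠ 0 := fun h0 => entry_ne_zero_iff.1 h <| by
    rw [← mul_assoc, h0, zero_mul, zero_mul]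
  obtain ⟨f, hf⟩ := IdemAtom.exists_mul_mul_ne_zero hea
  have hfe : mk f = mk e.1 := (mk_eq_mk.2 (IdemAtom.connected_of_mul_mul_ne_zero hf)).symm
  exact ⟨⟨f, hfe.trans e.2⟩, entry_ne_zero_iff.2 hf⟩

theorem entry_mul (a b : S) (i : AtomClass S) :
    (fun e f : i.Member => entry (a * b) e f) =
      rookMul (fun e f => entry a e f) (fun e f => entry b e f) := by
  funext e g
  by_cases h : ∃ f : i.Member, entry a e f ≠ 0
  · obtain ⟨f, hf⟩ := h
    rw [rookMul_eq_mul_of_row fun l hl => eq_of_entry_row_ne_zero hl hf, entry_mul_entry,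
      entry_eq_entry_iff, ← mul_assoc, ← mul_assoc, ← mul_assoc,
      IdemAtom.mul_mul_eq_mul_left (entry_ne_zero_iff.1 hf)]
  · rw [rookMul_eq_zero_of_row_eq_zero fun f => not_not.1 (not_exists.1 h f)]
    exact not_not.1 fun h0 => h (exists_entry_ne_zero_of_entry_mul_ne_zero h0)

open Classical in
/-- The blocks with coordinates `M`: zero between different components. -/
noncomputable def blocks (M : ∀ i : AtomClass S, i.Member → i.Member → WithZero i.Isotropy)
    (e f : IdemAtom S) : S :=
  if h : mk e = mk f then block ⟨e, h⟩ ⟨f, rfl⟩ (M (mk f) ⟨e, h⟩ ⟨f, rfl⟩) else 0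

variable {M : ∀ i : AtomClass S, i.Member → i.Member → WithZero i.Isotropy}

theorem blocks_member (e f : i.Member) : blocks M e.1 f.1 = block e f (M i e f) := by
  obtain ⟨f, rfl⟩ := f
  exact dif_pos e.2

theorem exists_member_of_blocks_ne_zero {e f : IdemAtom S} (h : blocks M e f ≠ 0) :
    ∃ (i : AtomClass S) (e' f' : i.Member), e'.1 = e ∧ f'.1 = f ∧ M i e' f' ≠ 0 := by
  have hef : mk e = mk f := not_not.1 fun h0 => h (dif_neg h0)
  refine ⟨mk f, ⟨e, hef⟩, ⟨f, rfl⟩, rfl, rfl, fun h0 => h ?_⟩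
  rw [blocks, dif_pos hef, h0, block_zero]

theorem mul_blocks_mul (e f : IdemAtom S) : e * blocks M e f * f = blocks M e f := by
  by_cases hef : mk e = mk f
  · rw [blocks, dif_pos hef]
    exact mul_block_mul (i := mk f) ⟨e, hef⟩ ⟨f, rfl⟩ _
  · rw [blocks, dif_neg hef, mul_zero, zero_mul]

theorem finite_blocks_ne_zero (hM : ∀ i, IsRook (M i))
    (hfin : {i : AtomClass S | M i ≠ fun _ _ => 0}.Finite) :
    {p : IdemAtom S × IdemAtom S | blocks M p.1 p.2 ≠ 0}.Finite := by
  refine (hfin.biUnion fun i _ => (hM i).1.image (Prod.map Subtype.val Subtype.val)).subset ?_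
  rintro ⟨_, _⟩ h
  obtain ⟨i, e, f, rfl, rfl, hef⟩ := exists_member_of_blocks_ne_zero h
  exact Set.mem_biUnion (fun h0 : M i = _ => hef (congrFun₂ h0 e f)) ⟨(e, f), hef, rfl⟩

theorem eq_of_blocks_row_ne_zero (hM : ∀ i, IsRook (M i)) {e f f' : IdemAtom S}
    (h : blocks M e f ≠ 0) (h' : blocks M e f' ≠ 0) : f = f' := by
  obtain ⟨i, e, f, rfl, rfl, hef⟩ := exists_member_of_blocks_ne_zero h
  obtain ⟨j, e', f', he', rfl, hef'⟩ := exists_member_of_blocks_ne_zero h'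
  obtain rfl : i = j := by rw [← e.2, ← he', e'.2]
  obtain rfl : e' = e := Subtype.ext he'
  rw [(isRook_iff.1 (hM i)).2.1 e' f f' hef hef']

theorem eq_of_blocks_column_ne_zero (hM : ∀ i, IsRook (M i)) {e e' f : IdemAtom S}
    (h : blocks M e f ≠ 0) (h' : blocks M e' f ≠ 0) : e = e' := by
  obtain ⟨i, e, f, rfl, rfl, hef⟩ := exists_member_of_blocks_ne_zero h
  obtain ⟨j, e', f', rfl, hf', hef'⟩ := exists_member_of_blocks_ne_zero h'
  obtain rfl : i = j := by rw [← f.2, ← hf', f'.2]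
  obtain rfl : f' = f := Subtype.ext hf'
  rw [(isRook_iff.1 (hM i)).2.2 e e' f' hef hef']

end AtomClass

end Coordinates

section Decomposition

variable [IsBooleanInverseSemigroup S]

attribute [local instance] semigroupWithZero naturalOrder

namespace AtomClass

theorem exists_entry_eq {M : ∀ i : AtomClass S, i.Member → i.Member → WithZero i.Isotropy}
    (hM : ∀ i, IsRook (M i)) (hfin : {i : AtomClass S | M i ≠ fun _ _ => 0}.Finite) :
    ∃ a : S, ∀ (i : AtomClass S) (e f : i.Member), entry a e f = M i e f := by
  obtain ⟨a, ha⟩ := IdemAtom.exists_forall_mul_mul_eq (mul_blocks_mul (M := M))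
    (finite_blocks_ne_zero hM hfin) (fun _ _ _ => eq_of_blocks_row_ne_zero hM)
    (fun _ _ _ => eq_of_blocks_column_ne_zero hM)
  exact ⟨a, fun i e f => entry_eq_iff.2 <| by rw [ha, blocks_member]⟩

theorem eq_of_entry_eq [WellFoundedLT S] {a b : S}
    (hab : ∀ (i : AtomClass S) (e f : i.Member), entry a e f = entry b e f) : a = b := by
  refine IdemAtom.ext_mul_mul fun e f => ?_
  by_cases hef : mk e = mk f
  · exact entry_eq_entry_iff.1 (hab (mk f) ⟨e, hef⟩ ⟨f, rfl⟩)
  · have mul_mul_eq_zero : ∀ c : S, e * c * f = 0 := fun c => not_not.1 fun h =>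
      hef (mk_eq_mk.2 (IdemAtom.connected_of_mul_mul_ne_zero h))
    rw [mul_mul_eq_zero, mul_mul_eq_zero]

end AtomClass

end Decomposition

/-- Every semisimple Boolean inverse semigroup is isomorphic to a restricted
direct product `⊕_{i ∈ I} M_{|X_i|}(G_i⁰)` of Boolean inverse semigroups of
generalized rook matrices over groups with zero adjoined: there is an injective
multiplicative map `Φ` whose image is exactly the set of finite-support families
of rook matrices. -/
theorem semisimple_structure (S : Type u) [Mul S] [Zero S] [Inv S]
    [IsBooleanInverseSemigroup S]
    (hss : ∀ a : S, {x : S | nle x a}.Finite) :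
    ∃ (I : Type u) (G : I → Type u) (_ : ∀ i, Group (G i))
      (X : I → Type u) (_ : ∀ i, Nonempty (X i))
      (Φ : S → ∀ i : I, {M : X i → X i → WithZero (G i) // IsRook M}),
      Function.Injective Φ ∧
      (∀ a : S, {i : I | (Φ a i).val ≠ fun _ _ => (0 : WithZero (G i))}.Finite) ∧
      (∀ f : ∀ i : I, {M : X i → X i → WithZero (G i) // IsRook M},
        {i : I | (f i).val ≠ fun _ _ => (0 : WithZero (G i))}.Finite →
          ∃ a : S, Φ a = f) ∧
      (∀ a b : S, ∀ i : I, (Φ (a * b) i).val = rookMul (Φ a i).val (Φ b i).val) := by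
  have := wellFoundedLT_of_finite_nle hss
  refine ⟨AtomClass S, AtomClass.Isotropy, fun _ => inferInstance, AtomClass.Member,
    fun i => ⟨i.rep, i.mk_rep⟩,
    fun a i => ⟨fun e f => AtomClass.entry a e f, AtomClass.isRook_entry (hss a) i⟩,
    fun a b hab => ?_, fun a => AtomClass.finite_entry_ne_zero (hss a), fun M hM => ?_,
    AtomClass.entry_mul⟩
  · exact AtomClass.eq_of_entry_eq fun i e f =>
      congrFun₂ (congrArg Subtype.val (congrFun hab i)) e f
  · obtain ⟨a, ha⟩ := AtomClass.exists_entry_eq (fun i => (M i).2) hM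
    exact ⟨a, funext fun i => Subtype.ext (funext₂ (ha i))⟩

end Paper
end

section
/- (Dichotomy theorem) Let S be a 0-simplifying Boolean inverse semigroup. Then exactly one of the following holds: (1) S is atomless; (2) S is semisimple. -/
namespace Paper

variable {S : Type*} [Mul S] [Zero S] [Inv S]

/-- An additive ideal: a nonempty two-sided semigroup ideal closed under binary
compatible joins. -/
def isAdditiveIdeal {S : Type*} [Mul S] [Inv S] (I : Set S) : Prop :=
  I.Nonempty ∧ (∀ a ∈ I, ∀ s : S, s * a ∈ I ∧ a * s ∈ I) ∧
    (∀ a ∈ I, ∀ b ∈ I, compat a b → ∀ j : S, isJoin a b j → j ∈ I)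

/-- `f ≼ e`: there is a pencil `x₁, …, xₘ` from `f` to `e`, i.e.
`f = ⋁ᵢ d(xᵢ)` and `r(xᵢ) ≤ e` for all `i`. -/
def pencilLe {S : Type*} [Mul S] [Inv S] (f e : S) : Prop :=
  ∃ (m : ℕ) (x : Fin (m + 1) → S),
    isJoinFin (fun i => (x i)⁻¹ * x i) f ∧ ∀ i, nle (x i * (x i)⁻¹) e

/-- `S` is `0`-simplifying: it is nonzero and its only additive ideals are `{0}`
and `S`. -/
def isZeroSimplifying (S : Type*) [Mul S] [Zero S] [Inv S] : Prop :=
  (∃ a : S, a ≠ 0) ∧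
    ∀ I : Set S, isAdditiveIdeal I → I = {(0 : S)} ∨ I = Set.univ

/-- `S` is fundamental: every element commuting with all idempotents is idempotent. -/
def isFundamental (S : Type*) [Mul S] : Prop :=
  ∀ a : S, (∀ e : S, idem e → a * e = e * a) → idem a

/-- A morphism (additive homomorphism) of Boolean inverse semigroups: a semigroup
homomorphism preserving `0` and binary compatible joins. -/
def isMorphism {S : Type*} {T : Type*} [Mul S] [Zero S] [Inv S]
    [Mul T] [Zero T] [Inv T] (θ : S → T) : Prop :=
  (∀ a b : S, θ (a * b) = θ a * θ b) ∧ θ 0 = 0 ∧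
    ∀ a b j : S, compat a b → isJoin a b j → isJoin (θ a) (θ b) (θ j)

/-!
The elements with finitely many elements below them form an additive ideal: everything below
`s * a` or `a * s` is a translate of an element below `a`, and by distributivity everything below a
join of `a` and `b` is the join of an element below `a` and an element below `b`. An atom is a
nonzero member of this ideal, so in the `0`-simplifying case one atom makes every lower set
finite. Conversely, a minimal nonzero element of a finite lower set is an atom.
-/

/-- Right multiplication distributes over binary joins. Two elements with a common upper bound are
automatically compatible, so these are exactly the compatible joins of the paper. -/
def JoinMulDistrib (S : Type*) [Mul S] [Inv S] : Prop :=
  ∀ a b j c : S, isJoin a b j → isJoin (a * c) (b * c) (j * c)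

/-- The set of elements whose principal order ideal `a↓` is finite; `S` is semisimple exactly when
this is all of `S`. -/
def finiteLower (S : Type*) [Mul S] [Inv S] : Set S :=
  {a | {x : S | nle x a}.Finite}

namespace IsInverseSemigroup

variable [IsInverseSemigroup S] {a b c e f j : S}

theorem inv_inv (a : S) : a⁻¹⁻¹ = a :=
  (inv_unique _ _ (inv_mul_inv a) (mul_inv_mul a)).symm

theorem inv_eq_self_of_idem (he : idem e) : e⁻¹ = e :=
  (inv_unique e e (by rw [he, he]) (by rw [he, he])).symm

theorem idem_inv_mul_self (a : S) : idem (a⁻¹ * a) := by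
  rw [idem, ← mul_assoc, inv_mul_inv]

theorem idem_mul_inv_self (a : S) : idem (a * a⁻¹) := by
  rw [idem, ← mul_assoc, mul_inv_mul]

theorem mul_mul_of_idem (he : idem e) (t : S) : e * (e * t) = e * t := by
  rw [← mul_assoc, he]

theorem mul_inv_mul_eq_inv_of_idem (he : idem e) (hf : idem f) :
    f * (e * f)⁻¹ * e = (e * f)⁻¹ := by
  apply inv_unique
  · calc e * f * (f * (e * f)⁻¹ * e) * (e * f)
        = e * f * (e * f)⁻¹ * (e * f) := by
          simp only [mul_assoc, mul_mul_of_idem he, mul_mul_of_idem hf]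
      _ = e * f := mul_inv_mul _
  · calc f * (e * f)⁻¹ * e * (e * f) * (f * (e * f)⁻¹ * e)
        = f * ((e * f)⁻¹ * (e * f) * (e * f)⁻¹) * e := by
          simp only [mul_assoc, mul_mul_of_idem he, mul_mul_of_idem hf]
      _ = f * (e * f)⁻¹ * e := by rw [inv_mul_inv]

theorem idem_mul (he : idem e) (hf : idem f) : idem (e * f) := by
  have hinv : idem (e * f)⁻¹ := by
    calc (e * f)⁻¹ * (e * f)⁻¹
        = f * (e * f)⁻¹ * e * (f * (e * f)⁻¹ * e) := by rw [mul_inv_mul_eq_inv_of_idem he hf]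
      _ = f * ((e * f)⁻¹ * (e * f) * (e * f)⁻¹) * e := by simp only [mul_assoc]
      _ = (e * f)⁻¹ := by rw [inv_mul_inv, mul_inv_mul_eq_inv_of_idem he hf]
  rwa [← inv_eq_self_of_idem hinv, inv_inv] at hinv

theorem mul_comm_of_idem (he : idem e) (hf : idem f) : e * f = f * e := by
  have hef : e * f * (e * f) = e * f := idem_mul he hf
  have hfe : f * e * (f * e) = f * e := idem_mul hf he
  have hinv : f * e = (e * f)⁻¹ := by
    simp only [mul_assoc] at hef hfe
    apply inv_unique <;>
      simpa only [mul_assoc, mul_mul_of_idem he, mul_mul_of_idem hf]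
  rw [hinv, inv_eq_self_of_idem (idem_mul he hf)]

theorem conj_mul_self_of_idem (b : S) (he : idem e) : b * e * b⁻¹ * b = b * e := by
  calc b * e * b⁻¹ * b = b * (e * (b⁻¹ * b)) := by simp only [mul_assoc]
    _ = b * b⁻¹ * b * e := by
      rw [mul_comm_of_idem he (idem_inv_mul_self b)]; simp only [mul_assoc]
    _ = b * e := by rw [mul_inv_mul]

theorem self_mul_inv_conj_of_idem (b : S) (he : idem e) : b * (b⁻¹ * e * b) = e * b := by
  calc b * (b⁻¹ * e * b) = b * b⁻¹ * e * b := by simp only [mul_assoc]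
    _ = e * (b * b⁻¹ * b) := by
      rw [mul_comm_of_idem (idem_mul_inv_self b) he]; simp only [mul_assoc]
    _ = e * b := by rw [mul_inv_mul]

theorem idem_conj (b : S) (he : idem e) : idem (b * e * b⁻¹) := by
  calc b * e * b⁻¹ * (b * e * b⁻¹) = b * e * b⁻¹ * b * (e * b⁻¹) := by simp only [mul_assoc]
    _ = b * e * b⁻¹ := by
      rw [conj_mul_self_of_idem b he]; simp only [mul_assoc, mul_mul_of_idem he]

theorem mul_inv_rev (a b : S) : (a * b)⁻¹ = b⁻¹ * a⁻¹ := by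
  have hcomm := mul_comm_of_idem (idem_mul_inv_self b) (idem_inv_mul_self a)
  symm
  apply inv_unique
  · calc a * b * (b⁻¹ * a⁻¹) * (a * b) = a * (b * b⁻¹ * (a⁻¹ * a)) * b := by simp only [mul_assoc]
      _ = a * a⁻¹ * a * (b * b⁻¹ * b) := by rw [hcomm]; simp only [mul_assoc]
      _ = a * b := by rw [mul_inv_mul, mul_inv_mul]
  · calc b⁻¹ * a⁻¹ * (a * b) * (b⁻¹ * a⁻¹) = b⁻¹ * (a⁻¹ * a * (b * b⁻¹)) * a⁻¹ := by
          simp only [mul_assoc]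
      _ = b⁻¹ * b * b⁻¹ * (a⁻¹ * a * a⁻¹) := by rw [← hcomm]; simp only [mul_assoc]
      _ = b⁻¹ * a⁻¹ := by rw [inv_mul_inv, inv_mul_inv]

theorem nle_iff_exists_mul_idem : nle a b ↔ ∃ e, idem e ∧ a = b * e := by
  constructor
  · intro h
    exact ⟨a⁻¹ * a, idem_inv_mul_self a, by rw [← mul_assoc]; exact h⟩
  · rintro ⟨e, he, rfl⟩
    apply Eq.symm
    calc b * (b * e)⁻¹ * (b * e) = b * e * b⁻¹ * b * e := by
          rw [mul_inv_rev, inv_eq_self_of_idem he]; simp only [mul_assoc]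
      _ = b * e := by rw [conj_mul_self_of_idem b he, mul_assoc, he]

theorem nle_iff_exists_idem_mul : nle a b ↔ ∃ e, idem e ∧ a = e * b := by
  rw [nle_iff_exists_mul_idem]
  constructor
  · rintro ⟨e, he, rfl⟩
    exact ⟨b * e * b⁻¹, idem_conj b he, (conj_mul_self_of_idem b he).symm⟩
  · rintro ⟨e, he, rfl⟩
    have hconj : idem (b⁻¹ * e * b) := by simpa only [inv_inv] using idem_conj b⁻¹ he
    exact ⟨b⁻¹ * e * b, hconj, (self_mul_inv_conj_of_idem b he).symm⟩

theorem nle_refl (a : S) : nle a a :=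
  (mul_inv_mul a).symm

theorem nle_trans (hab : nle a b) (hbc : nle b c) : nle a c := by
  obtain ⟨e, he, rfl⟩ := nle_iff_exists_mul_idem.1 hab
  obtain ⟨f, hf, rfl⟩ := nle_iff_exists_mul_idem.1 hbc
  exact nle_iff_exists_mul_idem.2 ⟨f * e, idem_mul hf he, mul_assoc c f e⟩

theorem nle_antisymm (hab : nle a b) (hba : nle b a) : a = b := by
  obtain ⟨e, he, hae⟩ := nle_iff_exists_mul_idem.1 hab
  obtain ⟨f, hf, hbf⟩ := nle_iff_exists_mul_idem.1 hba
  have hae' : a * e = a := by rw [hae, mul_assoc, he]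
  calc a = a * f * e := by rw [← hbf, ← hae]
    _ = a * e * f := by rw [mul_assoc, mul_comm_of_idem hf he, ← mul_assoc]
    _ = b := by rw [hae', ← hbf]

/-- The natural partial order as a Mathlib `PartialOrder`, giving access to the order library. -/
abbrev naturalPartialOrder (S : Type*) [Mul S] [Zero S] [Inv S] [IsInverseSemigroup S] :
    PartialOrder S where
  le := nle
  le_refl := nle_refl
  le_trans _ _ _ := nle_trans
  le_antisymm _ _ := nle_antisymm

theorem subsingleton_setOf_isJoin (a b : S) : {j | isJoin a b j}.Subsingleton :=
  fun _ hj _ hk => nle_antisymm (hj.2.2 _ hk.1 hk.2.1) (hk.2.2 _ hj.1 hj.2.1)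

theorem zero_mem_finiteLower : (0 : S) ∈ finiteLower S := by
  refine (Set.finite_singleton 0).subset fun x hx => ?_
  obtain ⟨e, -, rfl⟩ := nle_iff_exists_mul_idem.1 hx
  exact zero_mul e

theorem mul_left_mem_finiteLower (s : S) (ha : a ∈ finiteLower S) : s * a ∈ finiteLower S := by
  refine (ha.image (s * ·)).subset fun x hx => ?_
  obtain ⟨e, he, rfl⟩ := nle_iff_exists_mul_idem.1 hx
  exact ⟨a * e, nle_iff_exists_mul_idem.2 ⟨e, he, rfl⟩, (mul_assoc s a e).symm⟩

theorem mul_right_mem_finiteLower (s : S) (ha : a ∈ finiteLower S) : a * s ∈ finiteLower S := by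
  refine (ha.image (· * s)).subset fun x hx => ?_
  obtain ⟨e, he, rfl⟩ := nle_iff_exists_idem_mul.1 hx
  exact ⟨e * a, nle_iff_exists_idem_mul.2 ⟨e, he, rfl⟩, mul_assoc e a s⟩

theorem exists_isJoin_of_nle_isJoin (hdist : JoinMulDistrib S) (hj : isJoin a b j) {x : S}
    (hx : nle x j) : ∃ u v, nle u a ∧ nle v b ∧ isJoin u v x := by
  obtain ⟨e, he, rfl⟩ := nle_iff_exists_mul_idem.1 hx
  exact ⟨a * e, b * e, nle_iff_exists_mul_idem.2 ⟨e, he, rfl⟩,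
    nle_iff_exists_mul_idem.2 ⟨e, he, rfl⟩, hdist a b j e hj⟩

theorem mem_finiteLower_of_isJoin (hdist : JoinMulDistrib S) (ha : a ∈ finiteLower S)
    (hb : b ∈ finiteLower S) (hj : isJoin a b j) : j ∈ finiteLower S := by
  have hfin : (⋃ p ∈ {u | nle u a} ×ˢ {v | nle v b}, {x | isJoin p.1 p.2 x}).Finite :=
    (ha.prod hb).biUnion fun p _ => (subsingleton_setOf_isJoin p.1 p.2).finite
  refine hfin.subset fun x hx => ?_
  obtain ⟨u, v, hu, hv, hux⟩ := exists_isJoin_of_nle_isJoin hdist hj hx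
  exact Set.mem_biUnion (x := (u, v)) ⟨hu, hv⟩ hux

theorem isAdditiveIdeal_finiteLower (hdist : JoinMulDistrib S) :
    isAdditiveIdeal (finiteLower S) :=
  ⟨⟨0, zero_mem_finiteLower⟩,
    fun _ ha s => ⟨mul_left_mem_finiteLower s ha, mul_right_mem_finiteLower s ha⟩,
    fun _ ha _ hb _ _ hj => mem_finiteLower_of_isJoin hdist ha hb hj⟩

theorem exists_isAtomElem_of_mem_finiteLower (ha : a ∈ finiteLower S) (ha0 : a ≠ 0) :
    ∃ p : S, nle p a ∧ isAtomElem p := by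
  let _ := naturalPartialOrder S
  have hfin : {x : S | nle x a ∧ x ≠ 0}.Finite := ha.subset fun _ hx => hx.1
  obtain ⟨p, ⟨hpa, hp0⟩, hmin⟩ := hfin.exists_minimal ⟨a, nle_refl a, ha0⟩
  refine ⟨p, hpa, hp0, fun x hxp => or_iff_not_imp_right.2 fun hx0 => ?_⟩
  exact nle_antisymm hxp (hmin ⟨nle_trans hxp hpa, hx0⟩ hxp)

end IsInverseSemigroup

theorem mem_finiteLower_of_isAtomElem {p : S} (hp : isAtomElem p) : p ∈ finiteLower S :=
  (Set.toFinite {p, 0}).subset hp.2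

theorem finiteLower_eq_univ_of_isAtomElem [IsInverseSemigroup S] (hdist : JoinMulDistrib S)
    (h : isZeroSimplifying S) {p : S} (hp : isAtomElem p) : finiteLower S = Set.univ := by
  refine (h.2 _ (IsInverseSemigroup.isAdditiveIdeal_finiteLower hdist)).resolve_left fun hzero => ?_
  have hp_mem : p ∈ ({0} : Set S) := hzero ▸ mem_finiteLower_of_isAtomElem hp
  exact hp.1 hp_mem

theorem dichotomy_general (S : Type*) [Mul S] [Zero S] [Inv S] [IsInverseSemigroup S]
    (hdist : JoinMulDistrib S) (h : isZeroSimplifying S) :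
    Xor (∀ a : S, ¬ isAtomElem a) (∀ a : S, {x : S | nle x a}.Finite) := by
  rw [xor_iff_iff_not]
  constructor
  · intro hatomless hfin
    obtain ⟨a, ha0⟩ := h.1
    obtain ⟨p, -, hp⟩ := IsInverseSemigroup.exists_isAtomElem_of_mem_finiteLower (hfin a) ha0
    exact hatomless p hp
  · intro hnotfin p hp
    exact hnotfin (Set.eq_univ_iff_forall.1 (finiteLower_eq_univ_of_isAtomElem hdist h hp))

/-- Dichotomy theorem: a `0`-simplifying Boolean inverse semigroup is either
atomless or semisimple, and not both. -/
theorem dichotomy (S : Type*) [Mul S] [Zero S] [Inv S]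
    [IsBooleanInverseSemigroup S] (h : isZeroSimplifying S) :
    Xor' (∀ a : S, ¬ isAtomElem a) (∀ a : S, {x : S | nle x a}.Finite) := by
  exact dichotomy_general S IsBooleanInverseSemigroup.join_mul h

end Paper
end
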